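/- For any two distinct vertices u and v of the Shrikhande graph, the set of common neighbors of u and v, i.e., {w : w is adjacent to u and w is adjacent to v}, has exactly two elements. -/

import Mathlib

/-!
The graph is the Cayley graph of `(ZMod 4) × (ZMod 4)` with connection set
`S = {±(0,1), ±(1,0), ±(1,1)}`. Translating by `-u` turns the common neighbors of `u` and `v` into
the elements `x ∈ S` with `x - (v - u) ∈ S`, so it suffices that every nonzero `d` has exactly two
representations `d = x - y` with `x, y ∈ S`, which is a check over the fifteen values of `d`.
-/

/-- The Shrikhande graph on `(ZMod 4) × (ZMod 4)`: distinct vertices `(a,b)` and `(c,d)` are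
adjacent iff `(a-c, b-d) ∈ {(0,1),(0,3),(1,0),(3,0),(1,1),(3,3)}` (arithmetic mod 4; this
difference set is closed under negation, so the symmetrization `fromRel` does not change it). -/
def shrikhande : SimpleGraph (ZMod 4 × ZMod 4) :=
  SimpleGraph.fromRel (fun u v =>
    (u.1 - v.1, u.2 - v.2) ∈
      ({(0, 1), (0, 3), (1, 0), (3, 0), (1, 1), (3, 3)} : Finset (ZMod 4 × ZMod 4)))

/-- The connection set of the Shrikhande graph, viewed as a Cayley graph. -/
def connectionSet : Finset (ZMod 4 × ZMod 4) :=
  {(0, 1), (0, 3), (1, 0), (3, 0), (1, 1), (3, 3)}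

lemma neg_mem_connectionSet : ∀ x ∈ connectionSet, -x ∈ connectionSet := by
  decide

/-- Since the connection set is symmetric and omits `0`, neither the symmetrization nor the
distinctness condition in `SimpleGraph.fromRel` matters. -/
lemma shrikhande_adj_iff (w u : ZMod 4 × ZMod 4) :
    shrikhande.Adj w u ↔ w - u ∈ connectionSet := by
  have hadj : shrikhande.Adj w u ↔
      w ≠ u ∧ (w - u ∈ connectionSet ∨ u - w ∈ connectionSet) := Iff.rfl
  rw [hadj]
  constructor
  · rintro ⟨-, h | h⟩
    · exact h
    · simpa using neg_mem_connectionSet _ h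
  · intro h
    refine ⟨?_, Or.inl h⟩
    rintro rfl
    rw [sub_self] at h
    exact absurd h (by decide)

/-- Every nonzero element is a difference of two elements of the connection set in exactly two
ways. -/
lemma card_filter_connectionSet : ∀ d : ZMod 4 × ZMod 4, d ≠ 0 →
    (connectionSet.filter (fun x => x - d ∈ connectionSet)).card = 2 := by
  decide

/-- Any two distinct vertices of the Shrikhande graph have exactly two common neighbors. -/
theorem shrikhande_two_common_neighbors (u v : ZMod 4 × ZMod 4) (huv : u ≠ v) :
    {w : ZMod 4 × ZMod 4 | shrikhande.Adj w u ∧ shrikhande.Adj w v}.ncard = 2 := by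
  have himage : {w : ZMod 4 × ZMod 4 | shrikhande.Adj w u ∧ shrikhande.Adj w v} =
      (fun x => x + u) ''
        (connectionSet.filter (fun x => x - (v - u) ∈ connectionSet) : Set (ZMod 4 × ZMod 4)) := by
    ext w
    simp only [Set.mem_ofPred_eq, shrikhande_adj_iff, Set.mem_image, Finset.mem_coe,
      Finset.mem_filter]
    constructor
    · rintro ⟨hu, hv⟩
      exact ⟨w - u, ⟨hu, by simpa using hv⟩, sub_add_cancel w u⟩
    · rintro ⟨x, ⟨hx, hxd⟩, rfl⟩
      refine ⟨by simpa using hx, ?_⟩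
      rwa [show x + u - v = x - (v - u) by abel]
  rw [himage, Set.ncard_image_of_injective _ (add_left_injective u), Set.ncard_coe_finset]
  exact card_filter_connectionSet _ (sub_ne_zero.mpr huv.symm)
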